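/- arXiv:2401.07558 — 4 statements merged into one kernel-verified Lean document; each statement's English description precedes it below -/
import Mathlib

section
/- (Lemma 2) Let K and E be positive integers, η > 0, G ≥ 0, κ ≥ 0, λ ≥ 0, ε ≥ 0. For each k = 1, …, K let h_k : ℝ^{d_k} → ℝ^m be a κ-Lipschitz map and let n_k ≥ 0 be weights with ∑_{k=1}^K n_k ≤ 1. On a probability space, for each k let φ_k be a random point of ℝ^{d_k} and let g_{k,0}, …, g_{k,E−1} be integrable random vectors in ℝ^{d_k} with E[‖g_{k,e}‖] ≤ G for every e, and set φ'_k = φ_k − η ∑_{e=0}^{E−1} g_{k,e}. Let u and u' be random vectors in ℝ^m with λ‖u‖ ≤ ε and λ‖u'‖ ≤ ε almost surely, and define the global prototypes 𝒫 = ∑_{k=1}^K n_k h_k(φ_k) − u and 𝒫' = ∑_{k=1}^K n_k h_k(φ'_k) − u'. Let ℓ_d : ℝ^d → ℝ and P : ℝ^d → ℝ^m be measurable maps, let ω be a random point of ℝ^d, and define the local losses ℓ(ω) = ℓ_d(ω) + λ‖P(ω) − 𝒫‖ and ℓ'(ω) = ℓ_d(ω) + λ‖P(ω) − 𝒫'‖.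 Assuming all the quantities below are integrable, E[ℓ'(ω)] ≤ E[ℓ(ω)] + λ κ η E G + 2ε. -/
open MeasureTheory

/-- Lemma 2: bound on the increase of the expected local loss caused by server-side
prototype aggregation. Each `h k` is `κ`-Lipschitz, the weights `n k ≥ 0` sum to at most
`1`, each client `k` performs `E` stochastic gradient steps with learning rate `η` and
stochastic gradients of expected norm at most `G`, `u, u'` are the gaps introduced by the
quality-detection mechanism (with `λ‖u‖ ≤ ε`, `λ‖u'‖ ≤ ε` a.s.), the global prototypes are
`Pg = ∑ k n k • h k (φ k) − u` and `Pg' = ∑ k n k • h k (φ' k) − u'`, and the local losses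
are `ℓ(ω) = ℓ_d(ω) + λ‖P ω − Pg‖` and `ℓ'(ω) = ℓ_d(ω) + λ‖P ω − Pg'‖`. Then
`E[ℓ'(ω)] ≤ E[ℓ(ω)] + λ κ η E G + 2ε`. -/
theorem lemma2_prototype_aggregation_bound
    (K E : ℕ) (hK : 0 < K) (hE : 0 < E)
    (η : ℝ) (hη : 0 < η) (G : ℝ) (hG : 0 ≤ G) (κ : ℝ) (hκ : 0 ≤ κ)
    (lam : ℝ) (hlam : 0 ≤ lam) (ε : ℝ) (hε : 0 ≤ ε)
    (m : ℕ) (d : Fin K → ℕ) (dw : ℕ)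
    (h : ∀ k : Fin K, EuclideanSpace ℝ (Fin (d k)) → EuclideanSpace ℝ (Fin m))
    (hlip : ∀ k, ∀ a b, ‖h k a - h k b‖ ≤ κ * ‖a - b‖)
    (n : Fin K → ℝ) (hn : ∀ k, 0 ≤ n k) (hn_sum : ∑ k, n k ≤ 1)
    {Ω : Type*} [MeasurableSpace Ω] (μ : Measure Ω) [IsProbabilityMeasure μ]
    (φ : ∀ k : Fin K, Ω → EuclideanSpace ℝ (Fin (d k)))
    (hφ_meas : ∀ k, AEStronglyMeasurable (φ k) μ)
    (g : ∀ k : Fin K, ℕ → Ω → EuclideanSpace ℝ (Fin (d k)))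
    (hg_int : ∀ k, ∀ e, e < E → Integrable (g k e) μ)
    (hg_norm : ∀ k, ∀ e, e < E → ∫ ω, ‖g k e ω‖ ∂μ ≤ G)
    (φ' : ∀ k : Fin K, Ω → EuclideanSpace ℝ (Fin (d k)))
    (hφ' : ∀ k ω, φ' k ω = φ k ω - η • ∑ e ∈ Finset.range E, g k e ω)
    (u u' : Ω → EuclideanSpace ℝ (Fin m))
    (hu_meas : AEStronglyMeasurable u μ) (hu'_meas : AEStronglyMeasurable u' μ)
    (hu : ∀ᵐ ω ∂μ, lam * ‖u ω‖ ≤ ε) (hu' : ∀ᵐ ω ∂μ, lam * ‖u' ω‖ ≤ ε)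
    (Pg Pg' : Ω → EuclideanSpace ℝ (Fin m))
    (hPg : ∀ ω, Pg ω = (∑ k, n k • h k (φ k ω)) - u ω)
    (hPg' : ∀ ω, Pg' ω = (∑ k, n k • h k (φ' k ω)) - u' ω)
    (ℓd : EuclideanSpace ℝ (Fin dw) → ℝ)
    (P : EuclideanSpace ℝ (Fin dw) → EuclideanSpace ℝ (Fin m))
    (hℓd_meas : Measurable ℓd) (hP_meas : Measurable P)
    (w : Ω → EuclideanSpace ℝ (Fin dw))
    (hw_meas : AEStronglyMeasurable w μ)
    (hℓ_int : Integrable (fun ω => ℓd (w ω) + lam * ‖P (w ω) - Pg ω‖) μ)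
    (hℓ'_int : Integrable (fun ω => ℓd (w ω) + lam * ‖P (w ω) - Pg' ω‖) μ) :
    ∫ ω, (ℓd (w ω) + lam * ‖P (w ω) - Pg' ω‖) ∂μ ≤
      (∫ ω, (ℓd (w ω) + lam * ‖P (w ω) - Pg ω‖) ∂μ) + lam * κ * η * E * G + 2 * ε := by
  have hint : ∀ k, ∀ e ∈ Finset.range E, Integrable (fun ω => ‖g k e ω‖) μ :=
    fun k e he => (hg_int k e (Finset.mem_range.1 he)).norm
  have hint2 : ∀ k, Integrable (fun ω => ∑ e ∈ Finset.range E, ‖g k e ω‖) μ :=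
    fun k => integrable_finsetSum _ (hint k)
  have hS : Integrable (fun ω => ∑ k, n k * ∑ e ∈ Finset.range E, ‖g k e ω‖) μ :=
    integrable_finsetSum _ (fun k _ => (hint2 k).const_mul (n k))
  have hSle : ∫ ω, (∑ k, n k * ∑ e ∈ Finset.range E, ‖g k e ω‖) ∂μ ≤ E * G := by
    rw [integral_finsetSum _ (fun k _ => (hint2 k).const_mul (n k))]
    have h1 : ∀ k ∈ Finset.univ, ∫ ω, n k * ∑ e ∈ Finset.range E, ‖g k e ω‖ ∂μ
        ≤ n k * (E * G) := by
      intro k _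
      rw [integral_const_mul, integral_finsetSum _ (hint k)]
      apply mul_le_mul_of_nonneg_left _ (hn k)
      calc _ ≤ ∑ e ∈ Finset.range E, G :=
            Finset.sum_le_sum (fun e he => hg_norm k e (Finset.mem_range.1 he))
        _ = E * G := by simp
    refine (Finset.sum_le_sum h1).trans ?_
    rw [← Finset.sum_mul]
    exact mul_le_of_le_one_left (by positivity) hn_sum
  have hpt : ∀ᵐ ω ∂μ, ℓd (w ω) + lam * ‖P (w ω) - Pg' ω‖ ≤
      (ℓd (w ω) + lam * ‖P (w ω) - Pg ω‖) +
        (lam * κ * η * (∑ k, n k * ∑ e ∈ Finset.range E, ‖g k e ω‖) + 2 * ε) := by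
    filter_upwards [hu, hu'] with ω h1 h2
    have hA : ‖∑ k, n k • (h k (φ k ω) - h k (φ' k ω))‖ ≤
        κ * η * (∑ k, n k * ∑ e ∈ Finset.range E, ‖g k e ω‖) := by
      rw [Finset.mul_sum]
      refine norm_sum_le_of_le _ (fun k _ => ?_)
      rw [norm_smul, Real.norm_of_nonneg (hn k)]
      have h3 : ‖h k (φ k ω) - h k (φ' k ω)‖ ≤
          κ * (η * ∑ e ∈ Finset.range E, ‖g k e ω‖) := by
        refine (hlip k _ _).trans (mul_le_mul_of_nonneg_left ?_ hκ)
        rw [hφ', sub_sub_cancel, norm_smul, Real.norm_of_nonneg hη.le]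
        exact mul_le_mul_of_nonneg_left (norm_sum_le _ _) hη.le
      calc _ ≤ n k * (κ * (η * ∑ e ∈ Finset.range E, ‖g k e ω‖)) :=
            mul_le_mul_of_nonneg_left h3 (hn k)
        _ = _ := by ring
    have hB : P (w ω) - Pg' ω = (P (w ω) - Pg ω) +
        (∑ k, n k • (h k (φ k ω) - h k (φ' k ω))) - u ω + u' ω := by
      rw [hPg, hPg']
      simp only [smul_sub, Finset.sum_sub_distrib]
      abel
    have hC : ‖P (w ω) - Pg' ω‖ ≤ ‖P (w ω) - Pg ω‖ +
        κ * η * (∑ k, n k * ∑ e ∈ Finset.range E, ‖g k e ω‖) + ‖u ω‖ + ‖u' ω‖ := by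
      rw [hB]
      refine (norm_add_le _ _).trans (add_le_add_left ((norm_sub_le _ _).trans
        (add_le_add_left ((norm_add_le _ _).trans (add_le_add_right hA _)) _)) _)
    have hD := mul_le_mul_of_nonneg_left hC hlam
    linarith
  have hR := (hS.const_mul (lam * κ * η)).add (integrable_const (μ := μ) (2 * ε))
  have hfin := integral_mono_ae hℓ'_int (hℓ_int.add hR) hpt
  refine hfin.trans ?_
  rw [integral_add' hℓ_int hR, integral_add' (hS.const_mul (lam * κ * η)) (integrable_const _),
    integral_const_mul]
  have hF := mul_le_mul_of_nonneg_left hSle (by positivity : 0 ≤ lam * κ * η)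
  simp only [integral_const, probReal_univ, one_smul]
  linarith
end

section
/- (Theorem 1) Let K and E be positive integers, η > 0, L_a ≥ 0, σ² ≥ 0, G ≥ 0, κ ≥ 0, λ ≥ 0, ε ≥ 0. Fix a client index k. Let ℓ_d : ℝ^d → ℝ and P : ℝ^d → ℝ^m be measurable, let 𝒫 ∈ ℝ^m be a fixed global prototype, and suppose the local loss ℓ(ω) = ℓ_d(ω) + λ‖P(ω) − 𝒫‖ is differentiable with L_a-Lipschitz gradient. On a probability space with filtration (ℱ_e)_{e=0,…,E}, let ω_0 ∈ ℝ^d be deterministic and define ω_{e+1} = ω_e − η g_e for e = 0, …, E−1, where each g_e is ℱ_{e+1}-measurable, E[g_e | ℱ_e] = ∇ℓ(ω_e) a.s., E[‖g_e − ∇ℓ(ω_e)‖² | ℱ_e] ≤ σ² a.s., and E[‖g_e‖] ≤ G. Further, for each client index j = 1, …, K let h_j : ℝ^d → ℝ^m be a κ-Lipschitz map and n_j ≥ 0 weights with ∑_j n_j ≤ 1; let each client j run the same kind of E gradient steps ω_j' = ω_j − η ∑_{e=0}^{E−1} g_{j,e} with E[‖g_{j,e}‖] ≤ G (with ω_k =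 ω_0, ω_k' = ω_E); let u, u' be random vectors with λ‖u‖ ≤ ε and λ‖u'‖ ≤ ε a.s., and suppose 𝒫 = ∑_j n_j h_j(ω_j) − u and define the new global prototype 𝒫' = ∑_j n_j h_j(ω_j') − u' and the new local loss ℓ'(ω) = ℓ_d(ω) + λ‖P(ω) − 𝒫'‖. Assuming all quantities below are integrable, E[ℓ'(ω_E)] ≤ ℓ(ω_0) − (η − L_a η²/2) ∑_{e=0}^{E−1} E[‖∇ℓ(ω_e)‖²] + (L_a E η²/2) σ² + λ κ η E G + 2ε. -/
open MeasureTheory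

lemma descent_aux {d : ℕ} (f : EuclideanSpace ℝ (Fin d) → ℝ) (La : ℝ)
    (hf : Differentiable ℝ f)
    (hlip : ∀ x y, ‖gradient f x - gradient f y‖ ≤ La * ‖x - y‖)
    (x v : EuclideanSpace ℝ (Fin d)) :
    f (x + v) ≤ f x + inner ℝ (gradient f x) v + La / 2 * ‖v‖ ^ 2 := by
  let F : ℝ → ℝ := fun t => f (x + t • v) - t * inner ℝ (gradient f x) v
    - La / 2 * ‖v‖ ^ 2 * t ^ 2
  have hd : ∀ t, HasDerivAt F (inner ℝ (gradient f (x + t • v)) v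
      - inner ℝ (gradient f x) v - La * ‖v‖ ^ 2 * t) t := by
    intro t
    have h1 : HasDerivAt (fun t : ℝ => x + t • v) v t := by
      simpa using ((hasDerivAt_id t).smul_const v).const_add x
    have h2 := ((hf (x + t • v)).hasGradientAt.hasFDerivAt).comp_hasDerivAt t h1
    have h3 := (h2.sub ((hasDerivAt_id t).mul_const (inner ℝ (gradient f x) v))).sub
      (((hasDerivAt_id t).pow 2).const_mul (La / 2 * ‖v‖ ^ 2))
    have h4 : HasDerivAt F _ t := h3
    refine h4.congr_deriv ?_
    rw [InnerProductSpace.toDual_apply_apply]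
    simp only [id, Nat.cast_ofNat]
    ring
  have hanti : AntitoneOn F (Set.Icc 0 1) := by
    apply antitoneOn_of_deriv_nonpos (convex_Icc 0 1)
    · exact fun t _ => (hd t).continuousAt.continuousWithinAt
    · exact fun t _ => (hd t).differentiableAt.differentiableWithinAt
    · intro t ht
      rw [interior_Icc] at ht
      rw [(hd t).deriv, ← inner_sub_left]
      have h1 := real_inner_le_norm (gradient f (x + t • v) - gradient f x) v
      have h2 := hlip (x + t • v) x
      rw [add_sub_cancel_left, norm_smul, Real.norm_of_nonneg ht.1.le] at h2
      have h3 := mul_le_mul_of_nonneg_right h2 (norm_nonneg v)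
      nlinarith
  have h := hanti (Set.left_mem_Icc.2 zero_le_one) (Set.right_mem_Icc.2 zero_le_one) zero_le_one
  simp only [F, one_smul, zero_smul, add_zero] at h
  linarith

/-- Theorem 1: upper bound on the expected local loss of client `k` after one full
communication round of FedRFQ (E local SGD steps followed by server-side prototype
aggregation with the BFT-detect quality-detection gaps `u`, `u'`):
`E[ℓ'(ω_E)] ≤ ℓ(ω_0) − (η − L_a η²/2) ∑_{e<E} E[‖∇ℓ(ω_e)‖²] + (L_a E η²/2)σ²
  + λκηEG + 2ε`. -/
theorem theorem1_one_round_loss_bound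
    (K E : ℕ) (hK : 0 < K) (hE : 0 < E)
    (η : ℝ) (hη : 0 < η) (La : ℝ) (hLa : 0 ≤ La) (σ2 : ℝ) (hσ2 : 0 ≤ σ2)
    (G : ℝ) (hG : 0 ≤ G) (κ : ℝ) (hκ : 0 ≤ κ)
    (lam : ℝ) (hlam : 0 ≤ lam) (ε : ℝ) (hε : 0 ≤ ε)
    (d m : ℕ) (k : Fin K)
    (ℓd : EuclideanSpace ℝ (Fin d) → ℝ) (hℓd_meas : Measurable ℓd)
    (P : EuclideanSpace ℝ (Fin d) → EuclideanSpace ℝ (Fin m)) (hP_meas : Measurable P)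
    (PgOld : EuclideanSpace ℝ (Fin m))
    (ℓ : EuclideanSpace ℝ (Fin d) → ℝ)
    (hℓ : ∀ x, ℓ x = ℓd x + lam * ‖P x - PgOld‖)
    (hℓ_diff : Differentiable ℝ ℓ)
    (hℓ_lip : ∀ x y, ‖gradient ℓ x - gradient ℓ y‖ ≤ La * ‖x - y‖)
    {Ω : Type*} {m0 : MeasurableSpace Ω} (μ : Measure Ω) [IsProbabilityMeasure μ]
    (ℱ : Filtration ℕ m0)
    (w0 : EuclideanSpace ℝ (Fin d))
    (w : ℕ → Ω → EuclideanSpace ℝ (Fin d))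
    (hw0 : ∀ s, w 0 s = w0)
    (g : ℕ → Ω → EuclideanSpace ℝ (Fin d))
    (hupdate : ∀ e, e < E → ∀ s, w (e + 1) s = w e s - η • g e s)
    (hg_meas : ∀ e, e < E → StronglyMeasurable[ℱ (e + 1)] (g e))
    (hg_mean : ∀ e, e < E → μ[g e | ℱ e] =ᵐ[μ] fun s => gradient ℓ (w e s))
    (hg_var : ∀ e, e < E →
      ∀ᵐ s ∂μ, (μ[fun s' => ‖g e s' - gradient ℓ (w e s')‖ ^ 2 | ℱ e]) s ≤ σ2)
    (hg_norm : ∀ e, e < E → ∫ s, ‖g e s‖ ∂μ ≤ G)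
    (hg_int : ∀ e, e < E → Integrable (g e) μ)
    (hg_sq_int : ∀ e, e < E → Integrable (fun s => ‖g e s - gradient ℓ (w e s)‖ ^ 2) μ)
    (hℓw_int : ∀ e, e ≤ E → Integrable (fun s => ℓ (w e s)) μ)
    (hgrad_sq_int : ∀ e, e < E → Integrable (fun s => ‖gradient ℓ (w e s)‖ ^ 2) μ)
    (hj : Fin K → EuclideanSpace ℝ (Fin d) → EuclideanSpace ℝ (Fin m))
    (hj_lip : ∀ j, ∀ a b, ‖hj j a - hj j b‖ ≤ κ * ‖a - b‖)
    (n : Fin K → ℝ) (hn : ∀ j, 0 ≤ n j) (hn_sum : ∑ j, n j ≤ 1)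
    (φ φ' : Fin K → Ω → EuclideanSpace ℝ (Fin d))
    (hφ_meas : ∀ j, AEStronglyMeasurable (φ j) μ)
    (gj : Fin K → ℕ → Ω → EuclideanSpace ℝ (Fin d))
    (hgj_int : ∀ j, ∀ e, e < E → Integrable (gj j e) μ)
    (hgj_norm : ∀ j, ∀ e, e < E → ∫ s, ‖gj j e s‖ ∂μ ≤ G)
    (hφ' : ∀ j s, φ' j s = φ j s - η • ∑ e ∈ Finset.range E, gj j e s)
    (hφk : ∀ s, φ k s = w0)
    (hφ'k : ∀ s, φ' k s = w E s)
    (u u' : Ω → EuclideanSpace ℝ (Fin m))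
    (hu_meas : AEStronglyMeasurable u μ) (hu'_meas : AEStronglyMeasurable u' μ)
    (hu : ∀ᵐ s ∂μ, lam * ‖u s‖ ≤ ε) (hu' : ∀ᵐ s ∂μ, lam * ‖u' s‖ ≤ ε)
    (hPgOld : ∀ s, PgOld = (∑ j, n j • hj j (φ j s)) - u s)
    (Pg' : Ω → EuclideanSpace ℝ (Fin m))
    (hPg' : ∀ s, Pg' s = (∑ j, n j • hj j (φ' j s)) - u' s)
    (hℓ'_int : Integrable (fun s => ℓd (w E s) + lam * ‖P (w E s) - Pg' s‖) μ) :
    ∫ s, (ℓd (w E s) + lam * ‖P (w E s) - Pg' s‖) ∂μ ≤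
      ℓ w0
        - (η - La * η ^ 2 / 2) *
            ∑ e ∈ Finset.range E, ∫ s, ‖gradient ℓ (w e s)‖ ^ 2 ∂μ
        + La * E * η ^ 2 / 2 * σ2
        + lam * κ * η * E * G + 2 * ε := by
  have hgc : Continuous (gradient ℓ) := by
    have : LipschitzWith (Real.toNNReal La) (gradient ℓ) :=
      LipschitzWith.of_dist_le_mul fun x y => by
        rw [dist_eq_norm, dist_eq_norm, Real.coe_toNNReal La hLa]; exact hℓ_lip x y
    exact this.continuous
  have hw_meas : ∀ e, e ≤ E → StronglyMeasurable[ℱ e] (w e) := by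
    intro e
    induction e with
    | zero =>
      intro _
      have : w 0 = fun _ => w0 := funext hw0
      rw [this]
      exact stronglyMeasurable_const
    | succ e ih =>
      intro he
      have : w (e + 1) = fun s => w e s - η • g e s := funext (hupdate e he)
      rw [this]
      exact ((ih (by omega)).mono (ℱ.mono (Nat.le_succ e))).sub ((hg_meas e he).const_smul η)
  have step : ∀ e, e < E → ∫ s, ℓ (w (e + 1) s) ∂μ ≤ ∫ s, ℓ (w e s) ∂μ
      - (η - La * η ^ 2 / 2) * ∫ s, ‖gradient ℓ (w e s)‖ ^ 2 ∂μ + La * η ^ 2 / 2 * σ2 := by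
    intro e he
    have hGm : StronglyMeasurable[ℱ e] (fun s => gradient ℓ (w e s)) :=
      hgc.comp_stronglyMeasurable (hw_meas e he.le)
    have hI : Integrable (fun s => inner ℝ (gradient ℓ (w e s)) (g e s)) μ := by
      refine Integrable.mono' (((hgrad_sq_int e he).const_mul 2).add (hg_sq_int e he)) ?_ ?_
      · exact (hGm.mono (ℱ.le e)).aestronglyMeasurable.inner (hg_int e he).aestronglyMeasurable
      · refine ae_of_all _ fun s => ?_
        have h1 := norm_inner_le_norm (𝕜 := ℝ) (gradient ℓ (w e s)) (g e s)
        have h2 : ‖g e s‖ ≤ ‖g e s - gradient ℓ (w e s)‖ + ‖gradient ℓ (w e s)‖ := by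
          simpa using norm_add_le (g e s - gradient ℓ (w e s)) (gradient ℓ (w e s))
        have h3 := mul_le_mul_of_nonneg_left h2 (norm_nonneg (gradient ℓ (w e s)))
        simp only [Pi.add_apply]
        nlinarith [sq_nonneg (‖g e s - gradient ℓ (w e s)‖ - ‖gradient ℓ (w e s)‖),
          sq_nonneg (‖g e s - gradient ℓ (w e s)‖), sq_nonneg (‖gradient ℓ (w e s)‖)]
    have hIe : ∫ s, inner ℝ (gradient ℓ (w e s)) (g e s) ∂μ
        = ∫ s, ‖gradient ℓ (w e s)‖ ^ 2 ∂μ := by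
      have hp := condExp_bilin_of_stronglyMeasurable_left (μ := μ) (m := ℱ e) (innerSL ℝ)
        hGm hI (hg_int e he)
      refine (integral_condExp (ℱ.le e)).symm.trans ?_
      apply integral_congr_ae
      filter_upwards [hp, hg_mean e he] with s h1 h2
      refine h1.trans ?_
      rw [h2]
      exact real_inner_self_eq_norm_sq (gradient ℓ (w e s))
    have hV : ∫ s, ‖g e s - gradient ℓ (w e s)‖ ^ 2 ∂μ ≤ σ2 := by
      rw [← integral_condExp (ℱ.le e)]
      calc _ ≤ ∫ s, σ2 ∂μ := integral_mono_ae integrable_condExp (integrable_const _) (hg_var e he)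
        _ = σ2 := by simp
    have hpt : ∀ s, ℓ (w (e + 1) s) ≤ ℓ (w e s)
        + (La * η ^ 2 - η) * inner ℝ (gradient ℓ (w e s)) (g e s)
        + La * η ^ 2 / 2 * ‖g e s - gradient ℓ (w e s)‖ ^ 2
        + (-(La * η ^ 2 / 2)) * ‖gradient ℓ (w e s)‖ ^ 2 := by
      intro s
      have h := descent_aux ℓ La hℓ_diff hℓ_lip (w e s) (-(η • g e s))
      rw [← sub_eq_add_neg, ← hupdate e he s, inner_neg_right, inner_smul_right, norm_neg,
        norm_smul, Real.norm_of_nonneg hη.le] at h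
      have h2 := norm_sub_sq_real (g e s) (gradient ℓ (w e s))
      rw [real_inner_comm] at h2
      rw [h2]
      refine h.trans (le_of_eq ?_)
      ring
    have hi1 := (hℓw_int e he.le).add (hI.const_mul (La * η ^ 2 - η))
    have hi2 := (hg_sq_int e he).const_mul (La * η ^ 2 / 2)
    have hi3 := (hgrad_sq_int e he).const_mul (-(La * η ^ 2 / 2))
    have hm := integral_mono (hℓw_int (e + 1) he) ((hi1.add hi2).add hi3) hpt
    rw [integral_add' (hi1.add hi2) hi3, integral_add' hi1 hi2,
      integral_add' (hℓw_int e he.le) (hI.const_mul _), integral_const_mul, integral_const_mul,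
      integral_const_mul, hIe] at hm
    have := mul_le_mul_of_nonneg_left hV (show 0 ≤ La * η ^ 2 / 2 by positivity)
    linarith
  have tele : ∀ e, e ≤ E → ∫ s, ℓ (w e s) ∂μ ≤ ℓ w0 - (η - La * η ^ 2 / 2) *
      ∑ i ∈ Finset.range e, ∫ s, ‖gradient ℓ (w i s)‖ ^ 2 ∂μ + La * e * η ^ 2 / 2 * σ2 := by
    intro e
    induction e with
    | zero => intro _; simp [hw0]
    | succ e ih =>
      intro he
      have h1 := ih (by omega)
      have h2 := step e he
      rw [Finset.sum_range_succ]
      push_cast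
      linarith
  have hS : Integrable (fun s => ∑ j, n j * ∑ e ∈ Finset.range E, ‖gj j e s‖) μ :=
    integrable_finsetSum _ fun j _ => (integrable_finsetSum _ fun e he =>
      (hgj_int j e (Finset.mem_range.1 he)).norm).const_mul _
  have hSle : ∫ s, ∑ j, n j * ∑ e ∈ Finset.range E, ‖gj j e s‖ ∂μ ≤ E * G := by
    rw [integral_finsetSum _ fun j _ => (integrable_finsetSum _ fun e he =>
      (hgj_int j e (Finset.mem_range.1 he)).norm).const_mul _]
    calc _ ≤ ∑ j, n j * (E * G) := by
          refine Finset.sum_le_sum fun j _ => ?_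
          rw [integral_const_mul, integral_finsetSum _ fun e he =>
            (hgj_int j e (Finset.mem_range.1 he)).norm]
          refine mul_le_mul_of_nonneg_left ?_ (hn j)
          calc _ ≤ ∑ e ∈ Finset.range E, G :=
                Finset.sum_le_sum fun e he => hgj_norm j e (Finset.mem_range.1 he)
            _ = E * G := by simp
      _ = (∑ j, n j) * (E * G) := by rw [Finset.sum_mul]
      _ ≤ 1 * (E * G) := mul_le_mul_of_nonneg_right hn_sum (by positivity)
      _ = E * G := one_mul _
  have hpt : ∀ᵐ s ∂μ, ℓd (w E s) + lam * ‖P (w E s) - Pg' s‖ ≤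
      ℓ (w E s) + lam * κ * η * (∑ j, n j * ∑ e ∈ Finset.range E, ‖gj j e s‖) + 2 * ε := by
    filter_upwards [hu, hu'] with s h1 h2
    have hA : ‖∑ j, n j • (hj j (φ j s) - hj j (φ' j s))‖ ≤
        κ * η * ∑ j, n j * ∑ e ∈ Finset.range E, ‖gj j e s‖ := by
      rw [Finset.mul_sum]
      refine (norm_sum_le _ _).trans (Finset.sum_le_sum fun j _ => ?_)
      rw [norm_smul, Real.norm_of_nonneg (hn j)]
      have h3 := hj_lip j (φ j s) (φ' j s)
      rw [hφ', sub_sub_cancel, norm_smul, Real.norm_of_nonneg hη.le] at h3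
      have h4 := norm_sum_le (Finset.range E) (fun e => gj j e s)
      rw [hφ']
      calc _ ≤ n j * (κ * (η * ∑ e ∈ Finset.range E, ‖gj j e s‖)) := by
            refine mul_le_mul_of_nonneg_left (h3.trans ?_) (hn j)
            gcongr
        _ = _ := by ring
    have hB : P (w E s) - Pg' s = (P (w E s) - PgOld)
        + (∑ j, n j • (hj j (φ j s) - hj j (φ' j s)) - u s + u' s) := by
      simp only [smul_sub, Finset.sum_sub_distrib]
      rw [hPg' s, hPgOld s]
      abel
    have hC : ‖P (w E s) - Pg' s‖ ≤ ‖P (w E s) - PgOld‖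
        + (κ * η * (∑ j, n j * ∑ e ∈ Finset.range E, ‖gj j e s‖) + ‖u s‖ + ‖u' s‖) := by
      rw [hB]
      refine (norm_add_le _ _).trans (add_le_add_right ?_ _)
      refine (norm_add_le _ _).trans (add_le_add_left ?_ _)
      refine (norm_sub_le _ _).trans (add_le_add_left hA _)
    have hD := mul_le_mul_of_nonneg_left hC hlam
    rw [hℓ]
    linarith
  have hi := (hℓw_int E le_rfl).add (hS.const_mul (lam * κ * η))
  have hfin := integral_mono_ae hℓ'_int (hi.add (integrable_const (2 * ε))) hpt
  rw [integral_add' hi (integrable_const _),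
    integral_add' (hℓw_int E le_rfl) (hS.const_mul _), integral_const_mul] at hfin
  have hc : ∫ _s, 2 * ε ∂μ = 2 * ε := by simp
  rw [hc] at hfin
  have h1 := tele E le_rfl
  have h2 := mul_le_mul_of_nonneg_left hSle (show 0 ≤ lam * κ * η by positivity)
  linarith
end

section
/- Let k̂ ≥ 2 be an integer and set n = k̂². Define the SoftPool output S : ℝ^n → ℝ by S(x) = ∑_{i=1}^n (exp(x_i) / ∑_{j=1}^n exp(x_j)) · x_i. Then for all x, y ∈ ℝ^n, |S(x) − S(y)| ≤ (k̂² − 1) · max_{1 ≤ i ≤ n} |x_i − y_i|; that is, SoftPool is Lipschitz continuous with constant L₂′ = k̂² − 1 with respect to the supremum norm. -/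
open Finset

lemma softpool_coeff {n : ℕ} (hn : 4 ≤ n) (z : Fin n → ℝ) (s : ℝ)
    (hs : s = (∑ i, Real.exp (z i) * z i) / ∑ j, Real.exp (z j)) :
    ∑ i, |Real.exp (z i) * (1 + z i - s)| ≤ ((n : ℝ) - 1) * ∑ j, Real.exp (z j) := by
  have hne : (univ : Finset (Fin n)).Nonempty := ⟨⟨0, by omega⟩, mem_univ _⟩
  set Z := ∑ j, Real.exp (z j) with hZ
  have hZpos : 0 < Z := sum_pos (fun i _ => Real.exp_pos _) hne
  have hsum : ∑ i, Real.exp (z i) * z i = s * Z := by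
    rw [hs]; field_simp
  have hsum2 : ∑ i, Real.exp (z i) * (1 + z i - s) = Z := by
    have : ∀ i, Real.exp (z i) * (1 + z i - s)
        = Real.exp (z i) + Real.exp (z i) * z i - s * Real.exp (z i) := fun i => by ring
    simp only [this, sum_sub_distrib, sum_add_distrib, ← mul_sum, hsum, ← hZ]
    ring
  have hex : Real.exp s ≤ Z := by
    obtain ⟨j, -, hj⟩ : ∃ j ∈ (univ : Finset (Fin n)),
        Real.exp (z j) * s ≤ Real.exp (z j) * z j := by
      apply exists_le_of_sum_le hne
      rw [hsum, ← sum_mul, ← hZ, mul_comm]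
    have hj' : s ≤ z j := le_of_mul_le_mul_left hj (Real.exp_pos _)
    exact (Real.exp_le_exp.2 hj').trans
      (single_le_sum (f := fun j => Real.exp (z j)) (fun i _ => (Real.exp_pos _).le) (mem_univ j))
  have hlow : ∀ i, -(Z / 4) ≤ Real.exp (z i) * (1 + z i - s) := by
    intro i
    have h1 : s - z i - 1 ≤ Real.exp (s - z i - 2) := by
      have := Real.add_one_le_exp (s - z i - 2); linarith
    have h2 : Real.exp (z i) * Real.exp (s - z i - 2) * Real.exp 2 = Real.exp s := by
      rw [← Real.exp_add, ← Real.exp_add]; congr 1; ring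
    have h3 : (4 : ℝ) ≤ Real.exp 2 := by
      have h := Real.add_one_le_exp (1 : ℝ)
      have : Real.exp 2 = Real.exp 1 * Real.exp 1 := by rw [← Real.exp_add]; norm_num
      nlinarith
    have h4 := mul_le_mul_of_nonneg_left h1 (Real.exp_pos (z i)).le
    have h5 : 0 < Real.exp (z i) * Real.exp (s - z i - 2) := by positivity
    nlinarith
  have habs : ∀ i, |Real.exp (z i) * (1 + z i - s)| ≤ Real.exp (z i) * (1 + z i - s) + Z / 2 := by
    intro i
    have := hlow i
    rw [abs_le]; constructor <;> linarith
  calc _ ≤ ∑ i, (Real.exp (z i) * (1 + z i - s) + Z / 2) := sum_le_sum fun i _ => habs i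
    _ = Z + n * (Z / 2) := by rw [sum_add_distrib, hsum2]; simp
    _ ≤ _ := by
      have : (4 : ℝ) ≤ n := by exact_mod_cast hn
      nlinarith

lemma softpool_aux {n : ℕ} (hn : 4 ≤ n) (x y : Fin n → ℝ) (M : ℝ)
    (hM : ∀ i, |x i - y i| ≤ M) :
    |(∑ i, Real.exp (x i) * x i) / (∑ j, Real.exp (x j))
      - (∑ i, Real.exp (y i) * y i) / (∑ j, Real.exp (y j))| ≤ ((n : ℝ) - 1) * M := by
  have hne : (univ : Finset (Fin n)).Nonempty := ⟨⟨0, by omega⟩, mem_univ _⟩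
  let z : ℝ → Fin n → ℝ := fun t i => y i + t * (x i - y i)
  let g : ℝ → ℝ := fun t => (∑ i, Real.exp (z t i) * z t i) / (∑ j, Real.exp (z t j))
  have hz : ∀ t i, HasDerivAt (fun t => z t i) (x i - y i) t := fun t i => by
    have h := ((hasDerivAt_id t).mul_const (x i - y i)).const_add (y i)
    rw [one_mul] at h
    exact h
  have hZpos : ∀ t, 0 < ∑ j, Real.exp (z t j) := fun t =>
    sum_pos (fun i _ => Real.exp_pos _) hne
  have hg : ∀ t, HasDerivAt g
      ((∑ i, (Real.exp (z t i) * (1 + z t i - g t)) * (x i - y i)) / ∑ j, Real.exp (z t j)) t := by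
    intro t
    have hN : HasDerivAt (fun t => ∑ i, Real.exp (z t i) * z t i)
        (∑ i, (Real.exp (z t i) * (x i - y i) * z t i + Real.exp (z t i) * (x i - y i))) t :=
      HasDerivAt.fun_sum fun i _ => (hz t i).exp.mul (hz t i)
    have hD : HasDerivAt (fun t => ∑ i, Real.exp (z t i))
        (∑ i, (Real.exp (z t i) * (x i - y i))) t :=
      HasDerivAt.fun_sum fun i _ => (hz t i).exp
    refine (hN.fun_div hD (hZpos t).ne').congr_deriv ?_
    symm
    have hgt : ∑ i, Real.exp (z t i) * z t i = g t * ∑ j, Real.exp (z t j) := by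
      have := (hZpos t).ne'
      simp only [g]; field_simp
    have hsplit : ∑ i, (Real.exp (z t i) * (1 + z t i - g t)) * (x i - y i)
        = ∑ i, (Real.exp (z t i) * (x i - y i) * z t i + Real.exp (z t i) * (x i - y i))
          - g t * ∑ i, (Real.exp (z t i) * (x i - y i)) := by
      rw [mul_sum, ← sum_sub_distrib]
      exact sum_congr rfl fun i _ => by ring
    rw [hsplit, hgt]
    have := (hZpos t).ne'
    field_simp
  have hb : ∀ t, ‖(∑ i, (Real.exp (z t i) * (1 + z t i - g t)) * (x i - y i))
      / ∑ j, Real.exp (z t j)‖ ≤ ((n : ℝ) - 1) * M := by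
    intro t
    have hM0 : 0 ≤ M := (abs_nonneg _).trans (hM ⟨0, by omega⟩)
    rw [Real.norm_eq_abs, abs_div, abs_of_pos (hZpos t), div_le_iff₀ (hZpos t)]
    calc _ ≤ ∑ i, |(Real.exp (z t i) * (1 + z t i - g t)) * (x i - y i)| := abs_sum_le_sum_abs _ _
      _ ≤ ∑ i, |Real.exp (z t i) * (1 + z t i - g t)| * M := by
        refine sum_le_sum fun i _ => ?_
        rw [abs_mul]
        exact mul_le_mul_of_nonneg_left (hM i) (abs_nonneg _)
      _ = (∑ i, |Real.exp (z t i) * (1 + z t i - g t)|) * M := by rw [sum_mul]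
      _ ≤ (((n : ℝ) - 1) * ∑ j, Real.exp (z t j)) * M :=
        mul_le_mul_of_nonneg_right (softpool_coeff hn (z t) (g t) rfl) hM0
      _ = _ := by ring
  have key := Convex.norm_image_sub_le_of_norm_hasDerivWithin_le (s := Set.univ)
    (fun t _ => (hg t).hasDerivWithinAt) (fun t _ => hb t) convex_univ
    (Set.mem_univ (0 : ℝ)) (Set.mem_univ (1 : ℝ))
  simpa [g, z] using key

/-- Appendix B: the SoftPool output `S(x) = ∑ i (exp(x i) / ∑ j exp(x j)) * x i` on a
kernel region of size `k̂ × k̂` (so `n = k̂²` feature values) is Lipschitz continuous with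
constant `L₂′ = k̂² − 1` with respect to the supremum norm:
`|S(x) − S(y)| ≤ (k̂² − 1) · max_i |x i − y i|`. -/
theorem softpool_lipschitz_sup_norm
    (khat : ℕ) (hk : 2 ≤ khat)
    (S : (Fin (khat ^ 2) → ℝ) → ℝ)
    (hS : ∀ x, S x = ∑ i, (Real.exp (x i) / ∑ j, Real.exp (x j)) * x i)
    (x y : Fin (khat ^ 2) → ℝ) :
    |S x - S y| ≤ ((khat : ℝ) ^ 2 - 1) *
      (Finset.univ.sup' ⟨⟨0, pow_pos (by omega) 2⟩, Finset.mem_univ _⟩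
        fun i => |x i - y i|) := by
  have hn : 4 ≤ khat ^ 2 := by nlinarith
  have h := softpool_aux hn x y
    (Finset.univ.sup' ⟨⟨0, pow_pos (by omega) 2⟩, Finset.mem_univ _⟩ fun i => |x i - y i|)
    (fun i => Finset.le_sup' (fun i => |x i - y i|) (Finset.mem_univ i))
  have e : ∀ x, S x = (∑ i, Real.exp (x i) * x i) / (∑ j, Real.exp (x j)) := by
    intro x
    rw [hS, Finset.sum_div]
    exact Finset.sum_congr rfl fun i _ => by ring
  rw [e x, e y]
  push_cast at h
  exact h
end

section
/- For every p with 0 ≤ p < 0.1 and every integer N ≥ 21, the security probability ∑_{i=0}^{⌊(N−1)/3⌋} C(N, i) p^i (1−p)^{N−i} exceeds 0.99. -/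
lemma tail_chernoff (p : ℝ) (hp0 : 0 ≤ p) (hp : p < 0.1) (N k : ℕ) (hN : N ≤ 3 * k)
    (hk8 : 8 ≤ k) :
    ∑ i ∈ Finset.Ico k (N + 1), (N.choose i : ℝ) * p ^ i * (1 - p) ^ (N - i) < 0.01 := by
  have hq : 0 ≤ 1 - p := by norm_num at hp; linarith
  have h1 : (4.5 : ℝ) ^ k *
      ∑ i ∈ Finset.Ico k (N + 1), (N.choose i : ℝ) * p ^ i * (1 - p) ^ (N - i)
      ≤ (4.5 * p + (1 - p)) ^ N := by
    rw [add_pow, Finset.mul_sum]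
    calc _ ≤ ∑ i ∈ Finset.Ico k (N + 1),
          (4.5 * p) ^ i * (1 - p) ^ (N - i) * (N.choose i : ℝ) := by
          apply Finset.sum_le_sum
          intro i hi
          have hki := (Finset.mem_Ico.1 hi).1
          have ht : (4.5 : ℝ) ^ k ≤ 4.5 ^ i := pow_le_pow_right₀ (by norm_num) hki
          have hc : 0 ≤ (N.choose i : ℝ) * p ^ i * (1 - p) ^ (N - i) := by positivity
          calc _ ≤ (4.5 : ℝ) ^ i * ((N.choose i : ℝ) * p ^ i * (1 - p) ^ (N - i)) :=
                mul_le_mul_of_nonneg_right ht hc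
            _ = _ := by rw [mul_pow]; ring
      _ ≤ _ := by
          apply Finset.sum_le_sum_of_subset_of_nonneg
          · intro i hi
            simp only [Finset.mem_Ico, Finset.mem_range] at *
            exact hi.2
          · intro i _ _
            positivity
  have h2 : (4.5 * p + (1 - p)) ^ N ≤ (1.35 : ℝ) ^ (3 * k) :=
    calc _ ≤ (1.35 : ℝ) ^ N := by
          apply pow_le_pow_left₀ (by positivity)
          norm_num at hp ⊢; linarith
      _ ≤ _ := pow_le_pow_right₀ (by norm_num) hN
  have h3 : (1.35 : ℝ) ^ (3 * k) = 4.5 ^ k * 0.54675 ^ k := by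
    rw [pow_mul, ← mul_pow]; norm_num
  have h4 : (0.54675 : ℝ) ^ k ≤ 0.54675 ^ 8 :=
    pow_le_pow_of_le_one (by norm_num) (by norm_num) hk8
  have h5 : (0.54675 : ℝ) ^ 8 < 0.01 := by norm_num
  have h6 := le_of_mul_le_mul_left ((h1.trans h2).trans_eq h3) (by positivity)
  linarith

lemma tail_21 (p : ℝ) (hp0 : 0 ≤ p) (hp : p < 0.1) :
    ∑ i ∈ Finset.Ico 7 22, (Nat.choose 21 i : ℝ) * p ^ i * (1 - p) ^ (21 - i) < 0.01 := by
  have hq : 0 ≤ 1 - p := by norm_num at hp; linarith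
  have h1 : ∑ i ∈ Finset.Ico 7 22, (Nat.choose 21 i : ℝ) * p ^ i * (1 - p) ^ (21 - i)
      ≤ ∑ i ∈ Finset.Ico 7 22,
        7752 * p ^ 6 * (p ^ (i - 6) * (1 - p) ^ (15 - (i - 6)) * (Nat.choose 15 (i - 6) : ℝ)) := by
    apply Finset.sum_le_sum
    intro i hi
    have hc : ∀ i ∈ Finset.Ico 7 22, Nat.choose 21 i ≤ 7752 * Nat.choose 15 (i - 6) := by
      decide +kernel
    have hc' : (Nat.choose 21 i : ℝ) ≤ 7752 * (Nat.choose 15 (i - 6) : ℝ) := by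
      exact_mod_cast hc i hi
    obtain ⟨h7, h22⟩ := Finset.mem_Ico.1 hi
    obtain ⟨j, rfl⟩ := Nat.exists_eq_add_of_le (show 6 ≤ i by omega)
    have e : 21 - (6 + j) = 15 - j := by omega
    rw [Nat.add_sub_cancel_left] at *
    rw [e]
    calc _ = (Nat.choose 21 (6 + j) : ℝ) * (p ^ (6 + j) * (1 - p) ^ (15 - j)) := by ring
      _ ≤ 7752 * (Nat.choose 15 j : ℝ) * (p ^ (6 + j) * (1 - p) ^ (15 - j)) :=
          mul_le_mul_of_nonneg_right hc' (by positivity)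
      _ = _ := by ring
  have h2 : ∑ i ∈ Finset.Ico 7 22,
      (p ^ (i - 6) * (1 - p) ^ (15 - (i - 6)) * (Nat.choose 15 (i - 6) : ℝ)) ≤ 1 := by
    have h := add_pow p (1 - p) 15
    rw [add_sub_cancel, one_pow, Finset.sum_range_succ'] at h
    rw [Finset.sum_Ico_eq_sum_range]
    have e : ∀ i, 7 + i - 6 = i + 1 := by intro i; omega
    simp only [e]
    have : 0 ≤ p ^ 0 * (1 - p) ^ (15 - 0) * (Nat.choose 15 0 : ℝ) := by positivity
    norm_num only at h this ⊢
    linarith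
  rw [← Finset.mul_sum] at h1
  have h3 : p ^ 6 ≤ (0.1 : ℝ) ^ 6 := pow_le_pow_left₀ hp0 hp.le 6
  have h4 := mul_le_mul_of_nonneg_left h2 (show 0 ≤ 7752 * p ^ 6 by positivity)
  norm_num at h3 ⊢
  linarith

/-- For every probability `p < 0.1` of a server being malicious and every number of servers
`N ≥ 21`, the security probability `∑_{i=0}^{⌊(N−1)/3⌋} C(N,i) pⁱ (1−p)^{N−i}` of
BFT-detect exceeds `0.99`. -/
theorem security_probability_gt_099
    (p : ℝ) (hp0 : 0 ≤ p) (hp : p < 0.1) (N : ℕ) (hN : 21 ≤ N) :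
    (0.99 : ℝ) <
      ∑ i ∈ Finset.range ((N - 1) / 3 + 1),
        (N.choose i : ℝ) * p ^ i * (1 - p) ^ (N - i) := by
  have htot : ∑ i ∈ Finset.range (N + 1), (N.choose i : ℝ) * p ^ i * (1 - p) ^ (N - i) = 1 := by
    have h := add_pow p (1 - p) N
    rw [add_sub_cancel, one_pow] at h
    refine Eq.trans ?_ h.symm
    apply Finset.sum_congr rfl
    intro i _
    ring
  have hsplit := Finset.sum_range_add_sum_Ico
    (fun i => (N.choose i : ℝ) * p ^ i * (1 - p) ^ (N - i))
    (show (N - 1) / 3 + 1 ≤ N + 1 by omega)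
  have htail : ∑ i ∈ Finset.Ico ((N - 1) / 3 + 1) (N + 1),
      (N.choose i : ℝ) * p ^ i * (1 - p) ^ (N - i) < 0.01 := by
    rcases Nat.eq_or_lt_of_le hN with rfl | h
    · exact tail_21 p hp0 hp
    · exact tail_chernoff p hp0 hp N _ (by omega) (by omega)
  norm_num only at htail hsplit htot ⊢
  linarith
end
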